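/- Assume the feature vectors {φ(y)}_{y∈Y} are orthonormal and the ground truth reward r_G satisfies the reward structure assumption. Suppose θ_t evolves by gradient flow maximizing V_G. Then at any time t ≥ 0 such that V_G(θ_t) < r_G(y_med), it holds that d/dt π_{θ_t}(Y_bad) < 0. -/

import Mathlib

open scoped BigOperators RealInnerProductSpace

noncomputable def policy {Y : Type*} [Fintype Y] {D : ℕ}
    (φ : Y → EuclideanSpace ℝ (Fin D)) (θ : EuclideanSpace ℝ (Fin D)) (y : Y) : ℝ :=
  Real.exp ⟪φ y, θ⟫ / ∑ z, Real.exp ⟪φ z, θ⟫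

noncomputable def expReward {Y : Type*} [Fintype Y] {D : ℕ}
    (φ : Y → EuclideanSpace ℝ (Fin D)) (r : Y → ℝ) (θ : EuclideanSpace ℝ (Fin D)) : ℝ :=
  ∑ y, policy φ θ y * r y

theorem policy_hasFDerivAt {Y : Type*} [Fintype Y] [Nonempty Y] {D : ℕ}
    (φ : Y → EuclideanSpace ℝ (Fin D)) (θ : EuclideanSpace ℝ (Fin D)) (y : Y) :
    HasFDerivAt (fun θ => policy φ θ y)
      (policy φ θ y • (innerSL ℝ (φ y) - ∑ z, policy φ θ z • innerSL ℝ (φ z))) θ := by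
  have he : ∀ z, HasFDerivAt (fun θ : EuclideanSpace ℝ (Fin D) => Real.exp ⟪φ z, θ⟫)
      (Real.exp ⟪φ z, θ⟫ • innerSL ℝ (φ z)) θ := fun z =>
    ((innerSL ℝ (φ z)).hasFDerivAt (x := θ)).exp
  have hs : HasFDerivAt (fun θ : EuclideanSpace ℝ (Fin D) => ∑ z, Real.exp ⟪φ z, θ⟫)
      (∑ z, Real.exp ⟪φ z, θ⟫ • innerSL ℝ (φ z)) θ :=
    HasFDerivAt.fun_sum fun z _ => he z
  have hpos : 0 < ∑ z, Real.exp ⟪φ z, θ⟫ :=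
    Finset.sum_pos (fun z _ => Real.exp_pos _) Finset.univ_nonempty
  have h := (he y).mul ((hasDerivAt_inv hpos.ne').comp_hasFDerivAt θ hs)
  unfold policy
  simp only [div_eq_mul_inv]
  refine HasFDerivAt.congr_fderiv h ?_
  ext v
  simp only [← div_eq_mul_inv, add_apply, sub_apply, smul_apply, smul_eq_mul,
    sum_apply, innerSL_apply_apply, div_mul_eq_mul_div, ← Finset.sum_div]
  simp only [Function.comp_apply]
  field_simp
  ring

theorem policy_pos {Y : Type*} [Fintype Y] [Nonempty Y] {D : ℕ}
    (φ : Y → EuclideanSpace ℝ (Fin D)) (θ : EuclideanSpace ℝ (Fin D)) (y : Y) :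
    0 < policy φ θ y :=
  div_pos (Real.exp_pos _) (Finset.sum_pos (fun z _ => Real.exp_pos _) Finset.univ_nonempty)

theorem policy_sum {Y : Type*} [Fintype Y] [Nonempty Y] {D : ℕ}
    (φ : Y → EuclideanSpace ℝ (Fin D)) (θ : EuclideanSpace ℝ (Fin D)) :
    ∑ y, policy φ θ y = 1 := by
  unfold policy
  rw [← Finset.sum_div]
  exact div_self (Finset.sum_pos (fun z _ => Real.exp_pos _) Finset.univ_nonempty).ne'

theorem inner_gradient_expReward {Y : Type*} [Fintype Y] [Nonempty Y] {D : ℕ}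
    (φ : Y → EuclideanSpace ℝ (Fin D)) (horth : Orthonormal ℝ φ) (r : Y → ℝ)
    (θ : EuclideanSpace ℝ (Fin D)) (y : Y) :
    ⟪φ y, gradient (expReward φ r) θ⟫ = policy φ θ y * (r y - expReward φ r θ) := by
  classical
  have hV : HasFDerivAt (expReward φ r) (∑ z, r z • (policy φ θ z •
      (innerSL ℝ (φ z) - ∑ w, policy φ θ w • innerSL ℝ (φ w)))) θ := by
    unfold expReward
    exact HasFDerivAt.fun_sum fun z _ => (policy_hasFDerivAt φ θ z).mul_const (r z)
  have ho := orthonormal_iff_ite.mp horth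
  rw [real_inner_comm, gradient, hV.fderiv, InnerProductSpace.toDual_symm_apply]
  simp only [sub_apply, smul_apply, smul_eq_mul,
    sum_apply, innerSL_apply_apply, ho]
  simp only [mul_sub, Finset.sum_sub_distrib, mul_ite, mul_one, mul_zero, Finset.sum_ite_eq',
    Finset.mem_univ, if_true, expReward, Finset.mul_sum]
  congr 1
  · ring
  · exact Finset.sum_congr rfl fun z _ => by ring

theorem bad_prob_decreasing {Y : Type*} [Fintype Y] {D : ℕ}
    (φ : Y → EuclideanSpace ℝ (Fin D)) (hφ : ∀ y, φ y ≠ 0)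
    (horth : Orthonormal ℝ φ)
    (rG : Y → ℝ) (hrG : ∀ y, rG y ∈ Set.Icc (-1 : ℝ) 1)
    (ystar ymed ybad : Y) (Ybad : Finset Y) (hybad : ybad ∈ Ybad)
    (hsm : ystar ≠ ymed) (hsb : ystar ∉ Ybad) (hmb : ymed ∉ Ybad)
    (hcover : ∀ y : Y, y = ystar ∨ y = ymed ∨ y ∈ Ybad)
    (hr1 : rG ymed < rG ystar) (hr2 : 0 < rG ymed)
    (hr3 : ∀ y ∈ Ybad, rG y ≤ 0)
    (hr4 : ∀ y ∈ Ybad, rG y = rG ybad)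
    (Δ1 Δ2 : ℝ) (hΔ1 : Δ1 = rG ystar - rG ymed) (hΔ2 : Δ2 = rG ymed - rG ybad)
    (θt : ℝ → EuclideanSpace ℝ (Fin D))
    (hflow : ∀ t : ℝ, 0 ≤ t → HasDerivAt θt (gradient (expReward φ rG) (θt t)) t)
    (t : ℝ) (ht : 0 ≤ t)
    (hV : expReward φ rG (θt t) < rG ymed) :
    ∃ d : ℝ, HasDerivAt (fun τ : ℝ => ∑ y ∈ Ybad, policy φ (θt τ) y) d t ∧ d < 0 := by
  classical
  have : Nonempty Y := ⟨ystar⟩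
  have hd : ∀ y, HasDerivAt (fun τ : ℝ => policy φ (θt τ) y) _ t := fun y =>
    (policy_hasFDerivAt φ (θt t) y).comp_hasDerivAt t (hflow t ht)
  refine ⟨_, HasDerivAt.fun_sum fun y _ => hd y, ?_⟩
  have huniv : (Finset.univ : Finset Y) = insert ystar (insert ymed Ybad) := by
    ext y; simpa using hcover y
  have hsplit : ∀ f : Y → ℝ, ∑ y, f y = f ystar + (f ymed + ∑ y ∈ Ybad, f y) := by
    intro f
    rw [huniv, Finset.sum_insert (by simp [hsm, hsb]), Finset.sum_insert hmb]
  simp only [sub_apply, smul_apply, smul_eq_mul,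
    sum_apply, innerSL_apply_apply, inner_gradient_expReward φ horth]
  have hp := policy_pos φ (θt t)
  have hsum := policy_sum φ (θt t)
  have hVe : expReward φ rG (θt t) = ∑ y, policy φ (θt t) y * rG y := rfl
  generalize expReward φ rG (θt t) = V at *
  generalize policy φ (θt t) = p at *
  have hb : ∀ f : Y → ℝ → ℝ, ∑ y ∈ Ybad, f y (rG y) = ∑ y ∈ Ybad, f y (rG ybad) := fun f =>
    Finset.sum_congr rfl fun y hy => by rw [hr4 y hy]
  rw [hsplit] at hsum hVe
  rw [hb fun y x => p y * x, ← Finset.sum_mul] at hVe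
  have hS : ∑ y ∈ Ybad, p y * (p y * (rG y - V)) = (∑ y ∈ Ybad, p y ^ 2) * (rG ybad - V) := by
    rw [hb fun y x => p y * (p y * (x - V)), Finset.sum_mul]
    exact Finset.sum_congr rfl fun y _ => by ring
  simp only [mul_sub (p _) (p _ * _) _, Finset.sum_sub_distrib]
  rw [← Finset.sum_mul, hsplit, hS]
  have hSpos : 0 < ∑ y ∈ Ybad, p y ^ 2 :=
    Finset.sum_pos (fun y _ => pow_pos (hp y) 2) ⟨ybad, hybad⟩
  have hBpos : 0 < ∑ y ∈ Ybad, p y := Finset.sum_pos (fun y _ => hp y) ⟨ybad, hybad⟩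
  generalize ∑ y ∈ Ybad, p y ^ 2 = S at *
  generalize ∑ y ∈ Ybad, p y = B at *
  have hps := hp ystar
  have hpm := hp ymed
  have hrb := hr3 ybad hybad
  have hVb : 0 < V - rG ybad := by
    have : V - rG ybad = p ystar * (rG ystar - rG ybad) + p ymed * (rG ymed - rG ybad) := by
      linear_combination hVe + rG ybad * hsum
    rw [this]
    have h1 : 0 < rG ystar - rG ybad := by linarith
    have h2 : 0 < rG ymed - rG ybad := by linarith
    positivity
  have hs1 : 0 < rG ystar - V := by linarith
  have hm1 : 0 < rG ymed - V := by linarith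
  have hB1 : 0 < 1 - B := by linarith
  have e1 : 0 < S * (V - rG ybad) * (1 - B) := by positivity
  have e2 : 0 < B * (p ystar ^ 2 * (rG ystar - V) + p ymed ^ 2 * (rG ymed - V)) := by positivity
  nlinarith
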